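/- Suppose ℙ is an atomless probability measure on a Polish space Ω, X ∈ S_D(Ω) is such that the law μ of X has support contained in a compact subset of D, and the lift U is Fréchet differentiable at X (within S_D(Ω)). Then for every atomless probability measure ℙ̄ on a Polish space Ω̄ and every X̄ ∈ L²(Ω̄; ℝ^d) with X̄ ∈ D almost surely and with law equal to μ, the lift Ū : S_D(Ω̄) → ℝ, Ū(Y) := u(law of Y), is Fréchet differentiable at X̄ (within S_D(Ω̄)). -/

import Mathlib

open MeasureTheory

/-- A measure is atomless (in the general measure-theoretic sense) if there exists no
measurable set `E` of positive measure such that every measurable subset `G ⊆ E` with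
`μ G < μ E` satisfies `μ G = 0`. -/
def IsAtomlessMeasure {Ω : Type*} [MeasurableSpace Ω] (μ : Measure Ω) : Prop :=
  ¬ ∃ E : Set Ω, MeasurableSet E ∧ 0 < μ E ∧
      ∀ G : Set Ω, MeasurableSet G → G ⊆ E → μ G < μ E → μ G = 0

/-- The set `S_D(Ω)` of square integrable random variables taking values in `D`
almost surely. -/
def SD {Ω : Type*} [MeasurableSpace Ω] {d : ℕ} (D : Set (EuclideanSpace ℝ (Fin d)))
    (ℙ : Measure Ω) : Set (Lp (EuclideanSpace ℝ (Fin d)) 2 ℙ) :=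
  {Y | ∀ᵐ ω ∂ℙ, Y ω ∈ D}

/-- The lift `U(Y) := u(law of Y)` of a function `u` of measures. -/
noncomputable def lift {Ω : Type*} [MeasurableSpace Ω] {d : ℕ}
    (u : Measure (EuclideanSpace ℝ (Fin d)) → ℝ) (ℙ : Measure Ω) :
    Lp (EuclideanSpace ℝ (Fin d)) 2 ℙ → ℝ :=
  fun Y => u (ℙ.map Y)

/-! In general no measure-preserving map carries `X'` exactly to `X`, but the two are related
approximately. Partition the state space into countably many small cells. The events that `X` and
that `X'` lie in a given cell have equal mass, and an atomless piece of a standard Borel space can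
be transported onto any other piece of the same mass, so there are measure-preserving maps `fₙ`
with `X' ∘ fₙ → X`. Composition with `fₙ` is an isometry `Tₙ` of `L^p` spaces which preserves laws,
hence intertwines the two lifts. The functionals `A ∘ Tₙ` are bounded by `‖A‖`, and passing to the
limit in the first-order expansion at `X` shows that any weak-* cluster point of them is a
derivative at `X'`.
-/

open Filter Set Topology

lemma IsAtomlessMeasure.nullSingletonClass {Ω : Type*} [MeasurableSpace Ω]
    [MeasurableSingletonClass Ω] {μ : Measure Ω} (hμ : IsAtomlessMeasure μ) :
    NullSingletonClass μ := by
  refine ⟨fun x ↦ by_contra fun hx ↦ hμ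
    ⟨{x}, measurableSet_singleton x, pos_iff_ne_zero.2 hx, fun G _ hG hlt ↦ ?_⟩⟩
  obtain rfl | rfl := subset_singleton_iff_eq.1 hG
  · exact measure_empty
  · exact absurd hlt (lt_irrefl _)

section Transport

open ProbabilityTheory

lemma continuous_cdf (ν : Measure ℝ) [IsProbabilityMeasure ν] [NullSingletonClass ν] :
    Continuous (cdf ν) := by
  refine continuous_iff_continuousAt.2 fun x ↦ ?_
  rw [(cdf ν).mono.continuousAt_iff_leftLim_eq_rightLim, StieltjesFunction.rightLim_eq]
  have jump_eq_zero : ENNReal.ofReal (cdf ν x - Function.leftLim (cdf ν) x) = 0 := by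
    rw [← StieltjesFunction.measure_singleton, measure_cdf, measure_singleton]
  exact le_antisymm ((cdf ν).mono.leftLim_le le_rfl)
    (sub_nonpos.1 (ENNReal.ofReal_eq_zero.1 jump_eq_zero))

lemma Ioo_zero_one_subset_range_cdf (ν : Measure ℝ) [IsProbabilityMeasure ν]
    [NullSingletonClass ν] : Ioo 0 1 ⊆ range (cdf ν) := fun _ ht ↦
  mem_range_of_exists_le_of_exists_ge (continuous_cdf ν)
    (((tendsto_cdf_atBot ν).eventually_lt_const ht.1).exists.imp fun _ ↦ le_of_lt)
    (((tendsto_cdf_atTop ν).eventually_const_lt ht.2).exists.imp fun _ ↦ le_of_lt)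

lemma measure_setOf_cdf_le (ν : Measure ℝ) [IsProbabilityMeasure ν] [NullSingletonClass ν]
    {t : ℝ} (ht : t ∈ Icc 0 1) : ν {x | cdf ν x ≤ t} = ENNReal.ofReal t := by
  refine le_antisymm (ENNReal.le_of_forall_pos_le_add fun ε hε _ ↦ ?_) ?_
  · suffices ν {x | cdf ν x ≤ t} ≤ ENNReal.ofReal (t + ε) from
      this.trans (ENNReal.ofReal_add_le.trans_eq (by rw [ENNReal.ofReal_coe_nnreal]))
    rcases lt_or_ge (t + ε) 1 with hlt | hge
    · obtain ⟨s, hs⟩ := Ioo_zero_one_subset_range_cdf ν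
        ⟨add_pos_of_nonneg_of_pos ht.1 (NNReal.coe_pos.2 hε), hlt⟩
      have sublevel_subset : {x | cdf ν x ≤ t} ⊆ Iic s := fun x hx ↦
        ((monotone_cdf ν).reflect_lt (hx.trans_lt (by simpa [hs] using hε))).le
      calc ν {x | cdf ν x ≤ t} ≤ ν (Iic s) := measure_mono sublevel_subset
        _ = ENNReal.ofReal (t + ε) := by rw [← ofReal_cdf, hs]
    · exact prob_le_one.trans (ENNReal.one_le_ofReal.2 hge)
  · rcases ht.1.eq_or_lt with rfl | hpos
    · simp
    rcases ht.2.eq_or_lt with rfl | hlt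
    · simp [cdf_le_one]
    obtain ⟨s, rfl⟩ := Ioo_zero_one_subset_range_cdf ν ⟨hpos, hlt⟩
    rw [ofReal_cdf]
    exact measure_mono fun x hx ↦ monotone_cdf ν hx

lemma measurePreserving_cdf (ν : Measure ℝ) [IsProbabilityMeasure ν] [NullSingletonClass ν] :
    MeasurePreserving
      (fun x ↦ (⟨cdf ν x, cdf_nonneg ν x, cdf_le_one ν x⟩ : unitInterval)) ν volume := by
  have cdf_measurable : Measurable
      (fun x ↦ (⟨cdf ν x, cdf_nonneg ν x, cdf_le_one ν x⟩ : unitInterval)) :=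
    (monotone_cdf ν).measurable.subtype_mk
  have := Measure.isProbabilityMeasure_map (μ := ν) cdf_measurable.aemeasurable
  refine ⟨cdf_measurable, Measure.ext_of_Iic _ _ fun t ↦ ?_⟩
  rw [Measure.map_apply cdf_measurable measurableSet_Iic, unitInterval.volume_Iic]
  exact measure_setOf_cdf_le ν t.2

variable {Ω Ω' : Type*} [MeasurableSpace Ω] [StandardBorelSpace Ω]
  [MeasurableSpace Ω'] [StandardBorelSpace Ω'] [Nonempty Ω']

lemma exists_measurePreserving_of_isProbabilityMeasure
    (P : Measure Ω) [IsProbabilityMeasure P] [NullSingletonClass P]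
    (P' : Measure Ω') [IsProbabilityMeasure P'] :
    ∃ f : Ω → Ω', MeasurePreserving f P P' := by
  have embedding := measurableEmbedding_embeddingReal Ω
  have := Measure.isProbabilityMeasure_map (μ := P) embedding.measurable.aemeasurable
  have : NullSingletonClass (P.map (embeddingReal Ω)) := ⟨fun x ↦ by
    rw [embedding.map_apply]
    exact (subsingleton_singleton.preimage embedding.injective).measure_zero P⟩
  obtain ⟨g, g_measurable, map_g⟩ := P'.exists_measurable_map_eq
  exact ⟨_, (MeasurePreserving.mk g_measurable map_g).comp
    ((measurePreserving_cdf _).comp (embedding.measurable.measurePreserving P))⟩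

lemma exists_measurePreserving_of_measure_univ_eq
    (P : Measure Ω) [IsFiniteMeasure P] [NullSingletonClass P] (P' : Measure Ω')
    (hmass : P univ = P' univ) : ∃ f : Ω → Ω', MeasurePreserving f P P' := by
  rcases eq_or_ne P 0 with rfl | hP
  · obtain rfl : P' = 0 := Measure.measure_univ_eq_zero.1 (by simpa using hmass.symm)
    exact ⟨fun _ ↦ Classical.arbitrary Ω', measurable_const, by simp⟩
  have mass_ne_zero : P univ ≠ 0 := Measure.measure_univ_ne_zero.2 hP
  have mass_ne_top : P univ ≠ ⊤ := measure_ne_top P univ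
  have : IsProbabilityMeasure ((P univ)⁻¹ • P) :=
    ⟨by simp [ENNReal.inv_mul_cancel mass_ne_zero mass_ne_top]⟩
  have : IsProbabilityMeasure ((P univ)⁻¹ • P') :=
    ⟨by simp [← hmass, ENNReal.inv_mul_cancel mass_ne_zero mass_ne_top]⟩
  have : NullSingletonClass ((P univ)⁻¹ • P) := ⟨fun x ↦ by simp⟩
  obtain ⟨f, hf⟩ :=
    exists_measurePreserving_of_isProbabilityMeasure ((P univ)⁻¹ • P) ((P univ)⁻¹ • P')
  refine ⟨f, ?_⟩
  simpa [smul_smul, ENNReal.mul_inv_cancel mass_ne_zero mass_ne_top]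
    using hf.smul_measure (P univ)

lemma exists_measurePreserving_comp_ae_eq {ι : Type*} [Countable ι] [MeasurableSpace ι]
    [MeasurableSingletonClass ι] (P : Measure Ω) [IsFiniteMeasure P] [NullSingletonClass P]
    (P' : Measure Ω') {q : Ω → ι} {q' : Ω' → ι} (hq : Measurable q) (hq' : Measurable q')
    (hlaw : P'.map q' = P.map q) :
    ∃ f : Ω → Ω', MeasurePreserving f P P' ∧ q' ∘ f =ᵐ[P] q := by
  have exists_on_fiber (i : ι) : ∃ f : Ω → Ω',
      MeasurePreserving f (P.restrict (q ⁻¹' {i})) (P'.restrict (q' ⁻¹' {i})) := by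
    refine exists_measurePreserving_of_measure_univ_eq _ _ ?_
    simp only [Measure.restrict_apply_univ]
    rw [← Measure.map_apply hq (measurableSet_singleton i),
      ← Measure.map_apply hq' (measurableSet_singleton i), hlaw]
  choose τ hτ using exists_on_fiber
  let f : Ω → Ω' := fun ω ↦ τ (q ω) ω
  have f_measurable : Measurable f :=
    (measurable_from_prod_countable_right fun i ↦ (hτ i).measurable : Measurable
      fun x : ι × Ω ↦ τ x.1 x.2).comp (hq.prodMk measurable_id)
  have q'_comp_f : q' ∘ f =ᵐ[P] q := by
    have (i : ι) : ∀ᵐ ω ∂P, q ω = i → q' (τ i ω) = i :=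
      (ae_restrict_iff' (hq (measurableSet_singleton i))).1 ((hτ i).quasiMeasurePreserving.ae
        (ae_restrict_mem (hq' (measurableSet_singleton i))))
    filter_upwards [ae_all_iff.2 this] with ω hω using hω _ rfl
  refine ⟨f, ⟨f_measurable, ?_⟩, q'_comp_f⟩
  refine (Measure.ext_iff_of_iUnion_eq_univ (s := fun i ↦ q' ⁻¹' {i})
    (by ext; simp)).2 fun i ↦ ?_
  have preimage_fiber : f ⁻¹' (q' ⁻¹' {i}) =ᵐ[P] q ⁻¹' {i} :=
    q'_comp_f.preimage {i}
  have f_eq_on_fiber : f =ᵐ[P.restrict (q ⁻¹' {i})] τ i := by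
    filter_upwards [ae_restrict_mem (hq (measurableSet_singleton i))] with ω hω
    exact congrArg (τ · ω) hω
  rw [Measure.restrict_map f_measurable (hq' (measurableSet_singleton i)),
    Measure.restrict_congr_set preimage_fiber, Measure.map_congr f_eq_on_fiber, (hτ i).map_eq]

end Transport

section Approximation

lemma exists_measurable_nat_dist_lt (E : Type*) [PseudoMetricSpace E]
    [TopologicalSpace.SeparableSpace E] [MeasurableSpace E] [OpensMeasurableSpace E]
    {ε : ℝ} (hε : 0 < ε) :
    ∃ q : E → ℕ, Measurable q ∧ ∀ x y, q x = q y → dist x y < ε := by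
  classical
  rcases isEmpty_or_nonempty E with _ | _
  · exact ⟨fun _ ↦ 0, measurable_const, fun x ↦ isEmptyElim x⟩
  have exists_near (x : E) : ∃ n, dist x (TopologicalSpace.denseSeq E n) < ε / 2 :=
    (TopologicalSpace.denseRange_denseSeq E).exists_dist_lt x (half_pos hε)
  refine ⟨fun x ↦ Nat.find (exists_near x), measurable_find exists_near fun _ ↦
    measurableSet_ball, fun x y (hxy : Nat.find (exists_near x) = Nat.find (exists_near y)) ↦ ?_⟩
  have y_near := Nat.find_spec (exists_near y)
  rw [← hxy] at y_near
  exact add_halves ε ▸ (dist_triangle_right x y _).trans_lt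
    (add_lt_add (Nat.find_spec (exists_near x)) y_near)

variable {Ω Ω' : Type*} [MeasurableSpace Ω] [StandardBorelSpace Ω]
  [MeasurableSpace Ω'] [StandardBorelSpace Ω'] [Nonempty Ω']
  (P : Measure Ω) [IsFiniteMeasure P] [NullSingletonClass P] (P' : Measure Ω')

lemma exists_measurePreserving_ae_dist_lt {E : Type*} [PseudoMetricSpace E]
    [TopologicalSpace.SeparableSpace E] [MeasurableSpace E] [OpensMeasurableSpace E]
    {X : Ω → E} {X' : Ω' → E} (hX : Measurable X) (hX' : Measurable X')
    (hlaw : P'.map X' = P.map X) {ε : ℝ} (hε : 0 < ε) :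
    ∃ f : Ω → Ω', MeasurePreserving f P P' ∧ ∀ᵐ ω ∂P, dist (X' (f ω)) (X ω) < ε := by
  obtain ⟨q, q_measurable, dist_lt⟩ := exists_measurable_nat_dist_lt E hε
  obtain ⟨f, hf, hqf⟩ := exists_measurePreserving_comp_ae_eq P P'
    (q_measurable.comp hX) (q_measurable.comp hX') (by
      rw [← Measure.map_map q_measurable hX, ← Measure.map_map q_measurable hX', hlaw])
  exact ⟨f, hf, hqf.mono fun ω hω ↦ dist_lt _ _ hω⟩

lemma exists_tendsto_compMeasurePreserving {E : Type*} [NormedAddCommGroup E]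
    [SecondCountableTopology E] [MeasurableSpace E] [BorelSpace E] {p : ENNReal}
    [Fact (1 ≤ p)] (X : Lp E p P) (X' : Lp E p P') (hlaw : P'.map X' = P.map X) :
    ∃ (f : ℕ → Ω → Ω') (hf : ∀ n, MeasurePreserving (f n) P P'),
      Tendsto (fun n ↦ Lp.compMeasurePreserving (f n) (hf n) X') atTop (𝓝 X) := by
  choose f hf dist_lt using fun n : ℕ ↦ exists_measurePreserving_ae_dist_lt P P'
    (Lp.stronglyMeasurable X).measurable (Lp.stronglyMeasurable X').measurable hlaw
    (Nat.one_div_pos_of_nat (α := ℝ) (n := n))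
  refine ⟨f, hf, tendsto_iff_norm_sub_tendsto_zero.2 ?_⟩
  have norm_sub_le (n : ℕ) : ‖Lp.compMeasurePreserving (f n) (hf n) X' - X‖ ≤
      measureUnivNNReal P ^ p.toReal⁻¹ * (1 / ((n : ℝ) + 1)) := by
    refine Lp.norm_le_of_ae_bound (by positivity) ?_
    filter_upwards [Lp.coeFn_sub (Lp.compMeasurePreserving (f n) (hf n) X') X,
      Lp.coeFn_compMeasurePreserving X' (hf n), dist_lt n] with ω hsub hcomp hdist
    rw [hsub, Pi.sub_apply, hcomp, Function.comp_apply, ← dist_eq_norm]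
    exact hdist.le
  refine squeeze_zero (fun _ ↦ norm_nonneg _) norm_sub_le ?_
  simpa using tendsto_one_div_add_atTop_nhds_zero_nat.const_mul
    ((measureUnivNNReal P : ℝ) ^ p.toReal⁻¹)

end Approximation

section CompMeasurePreserving

variable {Ω Ω' E : Type*} [MeasurableSpace Ω] [MeasurableSpace Ω'] [NormedAddCommGroup E]
  {P : Measure Ω} {P' : Measure Ω'} {p : ENNReal} {f : Ω → Ω'}

lemma map_compMeasurePreserving [MeasurableSpace E] [BorelSpace E]
    (hf : MeasurePreserving f P P') (Y : Lp E p P') :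
    P.map (Lp.compMeasurePreserving f hf Y) = P'.map Y := by
  rw [Measure.map_congr (Lp.coeFn_compMeasurePreserving Y hf),
    ← Measure.map_map (Lp.stronglyMeasurable Y).measurable hf.measurable, hf.map_eq]

lemma ae_compMeasurePreserving_mem (hf : MeasurePreserving f P P') {D : Set E}
    {Y : Lp E p P'} (hY : ∀ᵐ ω ∂P', Y ω ∈ D) :
    ∀ᵐ ω ∂P, Lp.compMeasurePreserving f hf Y ω ∈ D := by
  filter_upwards [Lp.coeFn_compMeasurePreserving Y hf, hf.quasiMeasurePreserving.ae hY]
    with ω hcomp hmem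
  rwa [hcomp]

end CompMeasurePreserving

section Derivative

variable {ι 𝕜 V W : Type*} [NontriviallyNormedField 𝕜] [ProperSpace 𝕜]
  [NormedAddCommGroup V] [NormedSpace 𝕜 V] [NormedAddCommGroup W] [NormedSpace 𝕜 W]

lemma exists_tendsto_apply_of_opNorm_le (l : Ultrafilter ι) {B : ι → W →L[𝕜] 𝕜} {C : ℝ}
    (hB : ∀ i, ‖B i‖ ≤ C) :
    ∃ B' : W →L[𝕜] 𝕜, ∀ y, Tendsto (fun i ↦ B i y) l (𝓝 (B' y)) := by
  have eventually_mem_closedBall : ∀ᶠ i in (l : Filter ι), StrongDual.toWeakDual (B i) ∈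
      WeakDual.toStrongDual ⁻¹' Metric.closedBall (0 : StrongDual 𝕜 W) C :=
    .of_forall fun i ↦ mem_closedBall_zero_iff.2 (hB i)
  obtain ⟨B', -, hB'⟩ :=
    (WeakDual.isCompact_closedBall (0 : StrongDual 𝕜 W) C).ultrafilter_le_nhds
      (l.map fun i ↦ StrongDual.toWeakDual (B i)) (le_principal_iff.2 eventually_mem_closedBall)
  exact ⟨WeakDual.toStrongDual B', fun y ↦
    ((WeakDual.eval_continuous y).tendsto B').comp hB'⟩

lemma differentiableWithinAt_of_tendsto_linearIsometry (l : Filter ι) [l.NeBot]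
    {f : V → 𝕜} {s : Set V} {v : V} (hf : DifferentiableWithinAt 𝕜 f s v)
    {g : W → 𝕜} {t : Set W} {w : W} {T : ι → W →ₗᵢ[𝕜] V}
    (hTw : Tendsto (fun i ↦ T i w) l (𝓝 v)) (hTt : ∀ i, MapsTo (T i) t s)
    (hfT : ∀ i, EqOn (f ∘ T i) g t) (hfv : f v = g w) :
    DifferentiableWithinAt 𝕜 g t w := by
  obtain ⟨A, hA⟩ := hf
  have hTw' : Tendsto (fun i ↦ T i w - v) (Ultrafilter.of l) (𝓝 0) :=
    tendsto_sub_nhds_zero_iff.2 (hTw.mono_left (Ultrafilter.of_le l))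
  obtain ⟨B, hB⟩ : ∃ B : W →L[𝕜] 𝕜,
      ∀ y, Tendsto (fun i ↦ A (T i y)) (Ultrafilter.of l) (𝓝 (B y)) :=
    exists_tendsto_apply_of_opNorm_le (Ultrafilter.of l)
      (B := fun i ↦ A ∘L (T i).toContinuousLinearMap) fun i ↦ (A.opNorm_comp_le _).trans
        (mul_le_of_le_one_right (norm_nonneg A) (T i).norm_toContinuousLinearMap_le)
  refine ⟨B, .of_isLittleO (Asymptotics.isLittleO_iff.2 fun c hc ↦ ?_)⟩
  obtain ⟨δ, hδ, remainder_le⟩ := Metric.mem_nhdsWithin_iff.1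
    (Asymptotics.isLittleO_iff.1 hA.isLittleO hc)
  filter_upwards [inter_mem_nhdsWithin t (Metric.ball_mem_nhds w hδ)] with y ⟨hyt, hyδ⟩
  have sub_eq (i : ι) : T i y - v = T i (y - w) + (T i w - v) := by
    rw [map_sub, sub_add_sub_cancel]
  have norm_tendsto : Tendsto (fun i ↦ ‖T i y - v‖) (Ultrafilter.of l) (𝓝 ‖y - w‖) := by
    refine tendsto_const_nhds.congr_dist (squeeze_zero (fun _ ↦ dist_nonneg) (fun i ↦ ?_)
      (tendsto_zero_iff_norm_tendsto_zero.1 hTw'))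
    rw [dist_comm, Real.dist_eq, sub_eq, ← (T i).norm_map (y - w)]
    simpa using abs_norm_sub_norm_le (T i (y - w) + (T i w - v)) (T i (y - w))
  have linear_tendsto : Tendsto (fun i ↦ A (T i y - v)) (Ultrafilter.of l) (𝓝 (B (y - w))) := by
    simpa only [sub_eq, map_add, add_zero, Function.comp_apply] using
      (hB (y - w)).add ((A.continuous.tendsto' 0 0 (map_zero A)).comp hTw')
  refine le_of_tendsto_of_tendsto (tendsto_const_nhds.sub linear_tendsto).norm
    (norm_tendsto.const_mul c) ?_
  filter_upwards [norm_tendsto.eventually_lt_const (mem_ball_iff_norm.1 hyδ)] with i hi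
  have : ‖f (T i y) - f v - A (T i y - v)‖ ≤ c * ‖T i y - v‖ :=
    remainder_le ⟨mem_ball_iff_norm.2 hi, hTt i hyt⟩
  rwa [hfv, show f (T i y) = g y from hfT i hyt] at this

end Derivative

theorem lift_differentiable_independent_of_space_general
    {E : Type*} [NormedAddCommGroup E] [NormedSpace ℝ E] [SecondCountableTopology E]
    [MeasurableSpace E] [BorelSpace E] {p : ENNReal} [Fact (1 ≤ p)]
    (D : Set E) (u : Measure E → ℝ)
    {Ω : Type*} [MeasurableSpace Ω] [StandardBorelSpace Ω]
    (P : Measure Ω) [IsFiniteMeasure P] [NullSingletonClass P] (X : Lp E p P)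
    (hU : DifferentiableWithinAt ℝ (fun Y : Lp E p P ↦ u (P.map Y)) {Y | ∀ᵐ ω ∂P, Y ω ∈ D} X)
    {Ω' : Type*} [MeasurableSpace Ω'] [StandardBorelSpace Ω'] [Nonempty Ω']
    (P' : Measure Ω') (X' : Lp E p P') (hlaw : P'.map X' = P.map X) :
    DifferentiableWithinAt ℝ (fun Y : Lp E p P' ↦ u (P'.map Y)) {Y | ∀ᵐ ω ∂P', Y ω ∈ D} X' := by
  obtain ⟨f, hf, hfX'⟩ := exists_tendsto_compMeasurePreserving P P' X X' hlaw
  exact differentiableWithinAt_of_tendsto_linearIsometry atTop hU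
    (T := fun n ↦ Lp.compMeasurePreservingₗᵢ ℝ (f n) (hf n)) hfX'
    (fun n _ hY ↦ ae_compMeasurePreserving_mem (hf n) hY)
    (fun n Y _ ↦ congrArg u (map_compMeasurePreserving (hf n) Y)) (congrArg u hlaw.symm)

/-- If the lift of `u` is Fréchet differentiable (within `S_D`) at some `X` on an atomless
Polish probability space whose law is supported in a compact subset of `D`, then for any
other atomless Polish probability space and any square integrable `X'` valued in `D` a.s.
with the same law, the corresponding lift is Fréchet differentiable at `X'` within `S_D`. -/
theorem lift_differentiable_independent_of_space
    {d : ℕ} (D : Set (EuclideanSpace ℝ (Fin d))) (hDopen : IsOpen D) (hDne : D.Nonempty)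
    (u : Measure (EuclideanSpace ℝ (Fin d)) → ℝ)
    {Ω : Type*} [MeasurableSpace Ω] [TopologicalSpace Ω] [PolishSpace Ω] [BorelSpace Ω]
    (ℙ : Measure Ω) [IsProbabilityMeasure ℙ] (hP : IsAtomlessMeasure ℙ)
    (X : Lp (EuclideanSpace ℝ (Fin d)) 2 ℙ) (hX : X ∈ SD D ℙ)
    (K : Set (EuclideanSpace ℝ (Fin d))) (hK : IsCompact K) (hKD : K ⊆ D)
    (hsupp : ℙ.map X Kᶜ = 0)
    (A : Lp (EuclideanSpace ℝ (Fin d)) 2 ℙ →L[ℝ] ℝ)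
    (hA : HasFDerivWithinAt (lift u ℙ) A (SD D ℙ) X)
    {Ω' : Type*} [MeasurableSpace Ω'] [TopologicalSpace Ω'] [PolishSpace Ω'] [BorelSpace Ω']
    (ℙ' : Measure Ω') [IsProbabilityMeasure ℙ'] (hP' : IsAtomlessMeasure ℙ')
    (X' : Lp (EuclideanSpace ℝ (Fin d)) 2 ℙ') (hX' : X' ∈ SD D ℙ')
    (hlaw : ℙ'.map X' = ℙ.map X) :
    ∃ A' : Lp (EuclideanSpace ℝ (Fin d)) 2 ℙ' →L[ℝ] ℝ,
      HasFDerivWithinAt (lift u ℙ') A' (SD D ℙ') X' := by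
  have := hP.nullSingletonClass
  have := nonempty_of_isProbabilityMeasure ℙ'
  exact lift_differentiable_independent_of_space_general D u ℙ X ⟨A, hA⟩ ℙ' X' hlaw
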